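/- arXiv:math/0511400 — 9 statements merged into one kernel-verified Lean document; each statement's English description precedes it below -/
import Mathlib

section
/- Every finite almost cyclic group is cyclic. -/
/-- Every finite almost cyclic group is cyclic. -/
theorem isCyclic_of_finite_almost_cyclic {G : Type*} [Group G] [Finite G]
    (hG : ∃ x : G, ∀ y : G, ∃ a : G, ∃ n : ℤ, a * y * a⁻¹ = x ^ n) :
    IsCyclic G := by
  classical
  obtain ⟨x, hx⟩ := hG
  let H := Subgroup.zpowers x
  have := Fintype.ofFinite G
  have i1 : ∀ g : G, Fintype (MulAction.fixedBy (G ⧸ H) g) := fun g => Fintype.ofFinite _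
  have i2 : Fintype (Quotient (MulAction.orbitRel G (G ⧸ H))) := Fintype.ofFinite _
  have key := MulAction.sum_card_fixedBy_eq_card_orbits_mul_card_group G (G ⧸ H)
  have h1 : Fintype.card (Quotient (MulAction.orbitRel G (G ⧸ H))) ≤ 1 := by
    rw [Fintype.card_le_one_iff_subsingleton]
    exact (MulAction.pretransitive_iff_subsingleton_quotient G (G ⧸ H)).1 inferInstance
  -- every element fixes a coset
  have h2 : ∀ g : G, 1 ≤ Fintype.card (MulAction.fixedBy (G ⧸ H) g) := by
    intro g
    obtain ⟨a, n, h⟩ := hx g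
    refine Fintype.card_pos_iff.2 ⟨⟨((a⁻¹ : G) : G ⧸ H), ?_⟩⟩
    rw [MulAction.mem_fixedBy, MulAction.Quotient.smul_coe, eq_comm, QuotientGroup.eq]
    refine Subgroup.mem_zpowers_iff.2 ⟨n, ?_⟩
    rw [← h]
    simp [mul_assoc]
  have h3 : ∑ g : G, Fintype.card (MulAction.fixedBy (G ⧸ H) g) ≤ ∑ g : G, 1 := by
    rw [key]
    simpa using Nat.mul_le_mul_right (Fintype.card G) h1
  have h4 := (Finset.sum_eq_sum_iff_of_le (fun g _ => h2 g)).1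
    (le_antisymm (Finset.sum_le_sum (fun g _ => h2 g)) h3) 1 (Finset.mem_univ _)
  have h5 : Subsingleton (MulAction.fixedBy (G ⧸ H) (1 : G)) :=
    Fintype.card_le_one_iff_subsingleton.1 h4.symm.le
  refine ⟨x, fun g => ?_⟩
  have h6 : (⟨((1 : G) : G ⧸ H), by simp⟩ : MulAction.fixedBy (G ⧸ H) (1 : G))
      = ⟨(g : G ⧸ H), by simp⟩ := Subsingleton.elim _ _
  have h7 := QuotientGroup.eq.1 (Subtype.ext_iff.1 h6)
  simpa [H, Subgroup.mem_zpowers_iff] using h7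
end

section
/- Let G be almost cyclic with conjugate generator x, and let N be a nontrivial normal subgroup of G. Then there exists a smallest positive integer n such that x^n ∈ N, and for this n one has N ∩ ⟨x⟩ = ⟨x^n⟩. -/
/-- For a nontrivial normal subgroup `N` of an almost cyclic group with
conjugate generator `x`, there is a smallest positive `n` with `x ^ n ∈ N`, and
`N ⊓ ⟨x⟩ = ⟨x ^ n⟩`. -/
theorem normal_inf_zpowers_eq_zpowers_pow {G : Type*} [Group G] (x : G)
    (hx : ∀ y : G, ∃ a : G, ∃ n : ℤ, a * y * a⁻¹ = x ^ n)
    (N : Subgroup G) [N.Normal] (hN : N ≠ ⊥) :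
    ∃ n : ℕ, 0 < n ∧ x ^ n ∈ N ∧ (∀ m : ℕ, 0 < m → x ^ m ∈ N → n ≤ m) ∧
      N ⊓ Subgroup.zpowers x = Subgroup.zpowers (x ^ n) := by
  classical
  have hex : ∃ n : ℕ, 0 < n ∧ x ^ n ∈ N := by
    obtain ⟨y, hy, hy1⟩ := N.bot_or_exists_ne_one.resolve_left hN
    obtain ⟨a, k, hk⟩ := hx y
    have hmem : x ^ k ∈ N := hk ▸ (inferInstance : N.Normal).conj_mem y hy a
    have hk0 : k ≠ 0 := by
      rintro rfl
      rw [zpow_zero] at hk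
      exact hy1 (conj_eq_one_iff.1 hk)
    refine ⟨k.natAbs, Int.natAbs_pos.2 hk0, ?_⟩
    rcases Int.natAbs_eq k with h | h
    · rw [h, zpow_natCast] at hmem
      exact hmem
    · rw [h, zpow_neg, zpow_natCast] at hmem
      exact N.inv_mem_iff.1 hmem
  obtain ⟨hpos, hmem⟩ := Nat.find_spec hex
  have hmin : ∀ m : ℕ, 0 < m → x ^ m ∈ N → Nat.find hex ≤ m :=
    fun m h1 h2 => Nat.find_min' hex ⟨h1, h2⟩
  generalize Nat.find hex = n at hpos hmem hmin
  refine ⟨n, hpos, hmem, hmin, le_antisymm ?_ ?_⟩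
  · rintro z ⟨hz, k, rfl⟩
    have hz : x ^ k ∈ N := hz
    have hn : (0 : ℤ) < n := by exact_mod_cast hpos
    have hdiv : x ^ k = (x ^ n) ^ (k / n) * x ^ (k % n) := by
      rw [← zpow_natCast x n, ← zpow_mul, ← zpow_add, Int.mul_ediv_add_emod]
    have hr : x ^ (k % n) ∈ N := by
      rw [hdiv] at hz
      exact (N.mul_mem_cancel_left (N.zpow_mem hmem _)).1 hz
    obtain ⟨r, hr'⟩ := Int.eq_ofNat_of_zero_le (Int.emod_nonneg k hn.ne')
    have hlt := Int.emod_lt_of_pos k hn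
    rw [hr'] at hr hlt hdiv
    rw [zpow_natCast] at hr
    have hr0 : r = 0 := by
      by_contra h
      have := hmin r (Nat.pos_of_ne_zero h) hr
      omega
    subst hr0
    refine ⟨k / n, ?_⟩
    simpa using hdiv.symm
  · rw [Subgroup.zpowers_le]
    exact ⟨hmem, n, zpow_natCast x n⟩
end

section
/- Let G be almost cyclic with conjugate generator x, where x has prime order p. Then G is a simple group. -/
/-- An almost cyclic group with a conjugate generator of prime order
is simple. -/
theorem isSimpleGroup_of_almost_cyclic_prime_order {G : Type*} [Group G] (x : G)
    (hx : ∀ y : G, ∃ a : G, ∃ n : ℤ, a * y * a⁻¹ = x ^ n)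
    (p : ℕ) (hp : p.Prime) (hord : orderOf x = p) :
    IsSimpleGroup G := by
  have hx1 : x ≠ 1 := by
    rintro rfl
    rw [orderOf_one] at hord
    exact hp.one_lt.ne hord
  have : Nontrivial G := ⟨⟨x, 1, hx1⟩⟩
  refine ⟨fun N hN => ?_⟩
  rw [or_iff_not_imp_left]
  intro hbot
  obtain ⟨⟨y, hyN⟩, hy⟩ := Subgroup.ne_bot_iff_exists_ne_one.1 hbot
  have hy1 : y ≠ 1 := fun h => hy (Subtype.ext h)
  obtain ⟨a, n, h⟩ := hx y
  have hnN : x ^ n ∈ N := h ▸ hN.conj_mem y hyN a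
  have hpn : ¬ (p : ℤ) ∣ n := by
    intro hd
    rw [← hord, orderOf_dvd_iff_zpow_eq_one] at hd
    rw [hd] at h
    exact hy1 (conj_eq_one_iff.1 h)
  obtain ⟨u, v, huv⟩ := ((Nat.prime_iff_prime_int.1 hp).coprime_iff_not_dvd).2 hpn
  have hxp : x ^ (p : ℤ) = 1 := by rw [zpow_natCast, ← hord, pow_orderOf_eq_one]
  have hxN : x ∈ N := by
    have e : x = (x ^ n) ^ v := by
      calc x = x ^ (u * p + v * n) := by rw [huv, zpow_one]
        _ = (x ^ n) ^ v := by
          rw [zpow_add, mul_comm u, zpow_mul, hxp, one_zpow, one_mul, mul_comm v, zpow_mul]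
    rw [e]
    exact N.zpow_mem hnN v
  rw [Subgroup.eq_top_iff']
  intro z
  obtain ⟨b, m, hb⟩ := hx z
  have := hN.conj_mem _ (N.zpow_mem hxN m) b⁻¹
  rw [← hb] at this
  simpa [mul_assoc] using this
end

section
/- Let G be almost cyclic with conjugate generator x of prime order p. Then either G is isomorphic to ℤ/pℤ, or G is perfect, i.e., the commutator subgroup [G,G] equals G. -/
/-- An almost cyclic group with a conjugate generator of prime order `p`
is either isomorphic to `ℤ/pℤ` or perfect. -/
theorem almost_cyclic_prime_order_iso_zmod_or_perfect {G : Type*} [Group G] (x : G)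
    (hx : ∀ y : G, ∃ a : G, ∃ n : ℤ, a * y * a⁻¹ = x ^ n)
    (p : ℕ) (hp : p.Prime) (hord : orderOf x = p) :
    Nonempty (G ≃* Multiplicative (ZMod p)) ∨ commutator G = ⊤ := by
  have key : ∀ (a y : G), a * y * a⁻¹ ∈ commutator G → y ∈ commutator G := by
    intro a y h
    have := (inferInstance : (commutator G).Normal).conj_mem _ h a⁻¹
    simpa [mul_assoc] using this
  by_cases hxc : x ∈ commutator G
  · right
    rw [eq_top_iff]
    intro y _
    obtain ⟨a, n, h⟩ := hx y
    exact key a y (h ▸ Subgroup.zpow_mem _ hxc n)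
  · left
    have triv : ∀ y ∈ commutator G, y = 1 := by
      intro y hy
      obtain ⟨a, n, h⟩ := hx y
      have hn : x ^ n ∈ commutator G :=
        h ▸ (inferInstance : (commutator G).Normal).conj_mem _ hy a
      by_cases hd : (p : ℤ) ∣ n
      · have h1 : x ^ n = 1 := orderOf_dvd_iff_zpow_eq_one.mp (hord ▸ hd)
        rw [h1] at h
        exact conj_eq_one_iff.mp h
      · exfalso
        apply hxc
        have hc : IsCoprime (p : ℤ) n :=
          (Nat.prime_iff_prime_int.mp hp).coprime_iff_not_dvd.mpr hd
        obtain ⟨u, v, huv⟩ := hc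
        have hxp : x ^ (p : ℤ) = 1 := by
          rw [zpow_natCast, ← hord, pow_orderOf_eq_one]
        have : x = (x ^ n) ^ v := by
          calc x = x ^ (u * p + v * n) := by rw [huv, zpow_one]
            _ = (x ^ n) ^ v := by
              rw [zpow_add, mul_comm u, zpow_mul, hxp, one_zpow, one_mul, mul_comm v, zpow_mul]
        rw [this]
        exact Subgroup.zpow_mem _ hn v
    have comm : ∀ a b : G, a * b = b * a := fun a b =>
      commutatorElement_eq_one_iff_mul_comm.mp (triv _
        (Subgroup.commutator_mem_commutator (Subgroup.mem_top a) (Subgroup.mem_top b)))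
    have gen : ∀ y : G, y ∈ Subgroup.zpowers x := by
      intro y
      obtain ⟨a, n, h⟩ := hx y
      refine ⟨n, ?_⟩
      rw [comm a y, mul_inv_cancel_right] at h
      exact h.symm
    haveI : IsCyclic G := ⟨x, gen⟩
    have hcard : Nat.card G = p := by
      rw [← hord]; exact (orderOf_eq_card_of_forall_mem_zpowers gen).symm
    subst hcard
    exact ⟨(zmodCyclicMulEquiv this).symm⟩
end

section
/- Let G be almost cyclic with a conjugate generator x of order 2. Then G is isomorphic to ℤ/2ℤ. -/
/-- An almost cyclic group with a conjugate generator of order 2 is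
isomorphic to `ℤ/2ℤ`. -/
theorem almost_cyclic_order_two_iso_zmod_two {G : Type*} [Group G] (x : G)
    (hx : ∀ y : G, ∃ a : G, ∃ n : ℤ, a * y * a⁻¹ = x ^ n)
    (hord : orderOf x = 2) :
    Nonempty (G ≃* Multiplicative (ZMod 2)) := by
  have hx2 : x * x = 1 := by
    rw [← pow_two, ← hord, pow_orderOf_eq_one]
  have hsq : ∀ y : G, y * y = 1 := by
    intro y
    obtain ⟨a, n, h⟩ := hx y
    have h1 : (a * y * a⁻¹) * (a * y * a⁻¹) = 1 := by
      rw [h, ← (Commute.refl x).mul_zpow, hx2, one_zpow]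
    have h2 : a * (y * y) * a⁻¹ = 1 := by
      rw [← h1]; group
    exact conj_eq_one_iff.mp h2
  have hinv : ∀ y : G, y⁻¹ = y := fun y => inv_eq_of_mul_eq_one_right (hsq y)
  have hcomm : ∀ y z : G, y * z = z * y := by
    intro y z
    have h := hinv (y * z)
    rw [mul_inv_rev, hinv, hinv] at h
    exact h.symm
  have hgen : ∀ y : G, y ∈ Subgroup.zpowers x := by
    intro y
    obtain ⟨a, n, h⟩ := hx y
    rw [hcomm a y, mul_inv_cancel_right] at h
    exact ⟨n, h.symm⟩
  have hcard : Nat.card G = 2 := by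
    rw [← orderOf_eq_card_of_forall_mem_zpowers hgen, hord]
  haveI : Fact (Nat.Prime 2) := ⟨Nat.prime_two⟩
  exact ⟨mulEquivOfPrimeCardEq (p := 2) hcard (by simp)⟩
end

section
/- Let G be almost cyclic with conjugate generator x, and let N be a normal subgroup of G such that G/N is cyclic. Then N is itself an almost cyclic group; in fact, x^m is a conjugate generator for N, where m is the smallest positive integer with x^m ∈ N. -/
/-- If `G` is almost cyclic with conjugate generator `x` and `G/N` is
cyclic, then `N` is almost cyclic; in fact `x ^ m` is a conjugate generator for `N`
whenever `m` is the smallest positive integer with `x ^ m ∈ N`. -/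
theorem normal_subgroup_almost_cyclic_of_cyclic_quotient {G : Type*} [Group G] (x : G)
    (hx : ∀ y : G, ∃ a : G, ∃ n : ℤ, a * y * a⁻¹ = x ^ n)
    (N : Subgroup G) [N.Normal] (hcyc : IsCyclic (G ⧸ N)) :
    (∃ w ∈ N, ∀ y ∈ N, ∃ z ∈ N, ∃ q : ℤ, z * y * z⁻¹ = w ^ q) ∧
    ∀ m : ℕ, 0 < m → x ^ m ∈ N → (∀ l : ℕ, 0 < l → x ^ l ∈ N → m ≤ l) →
      ∀ y ∈ N, ∃ z ∈ N, ∃ q : ℤ, z * y * z⁻¹ = (x ^ m) ^ q := by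
  have key : ∀ y ∈ N, ∃ z ∈ N, ∃ n : ℤ, z * y * z⁻¹ = x ^ n := by
    intro y hy
    obtain ⟨a, n, han⟩ := hx y
    obtain ⟨b, k, hbk⟩ := hx a
    refine ⟨x ^ (-k) * a, ?_, n, ?_⟩
    · rw [← QuotientGroup.eq_one_iff]
      have h1 : ((b * a * b⁻¹ : G) : G ⧸ N) = ((x ^ k : G) : G ⧸ N) := by rw [hbk]
      have hc : ∀ u v : G ⧸ N, u * v = v * u := fun u v => hcyc.isMulCommutative.is_comm.comm u v
      have h2 : ((b * a * b⁻¹ : G) : G ⧸ N) = (a : G ⧸ N) := by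
        rw [QuotientGroup.mk_mul, QuotientGroup.mk_mul, hc (b : G ⧸ N), QuotientGroup.mk_inv,
          mul_inv_cancel_right]
      rw [QuotientGroup.mk_mul, ← h2, h1, ← QuotientGroup.mk_mul, zpow_neg, inv_mul_cancel,
        QuotientGroup.mk_one]
    · have : x ^ (-k) * a * y * (x ^ (-k) * a)⁻¹ = x ^ (-k) * (a * y * a⁻¹) * x ^ k := by group
      rw [this, han, ← zpow_add, ← zpow_add]
      congr 1
      ring
  have main : ∀ m : ℕ, 0 < m → x ^ m ∈ N → (∀ l : ℕ, 0 < l → x ^ l ∈ N → m ≤ l) →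
      ∀ y ∈ N, ∃ z ∈ N, ∃ q : ℤ, z * y * z⁻¹ = (x ^ m) ^ q := by
    intro m hm hxm hmin y hy
    obtain ⟨z, hz, n, hn⟩ := key y hy
    have hxn : x ^ n ∈ N := hn ▸ N.mul_mem (N.mul_mem hz hy) (N.inv_mem hz)
    have hm' : (0 : ℤ) < m := by exact_mod_cast hm
    have hdiv := Int.emod_add_mul_ediv n m
    have hlt := Int.emod_lt_of_pos n hm'
    obtain ⟨r, hr⟩ := Int.eq_ofNat_of_zero_le (Int.emod_nonneg n hm'.ne')
    have hrN : x ^ r ∈ N := by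
      have : x ^ r = x ^ n * ((x ^ m) ^ (n / (m : ℤ)))⁻¹ := by
        rw [eq_mul_inv_iff_mul_eq, ← zpow_natCast x m, ← zpow_mul, ← zpow_natCast x r,
          ← zpow_add, ← hr, hdiv]
      rw [this]
      exact N.mul_mem hxn (N.inv_mem (N.zpow_mem hxm _))
    have hr0 : r = 0 := by
      by_contra h
      have := hmin r (Nat.pos_of_ne_zero h) hrN
      omega
    refine ⟨z, hz, n / (m : ℤ), ?_⟩
    rw [hn, ← zpow_natCast x m, ← zpow_mul]
    congr 1
    rw [hr, hr0] at hdiv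
    simpa using hdiv.symm
  refine ⟨?_, main⟩
  classical
  by_cases h : ∃ m : ℕ, 0 < m ∧ x ^ m ∈ N
  · exact ⟨x ^ Nat.find h, (Nat.find_spec h).2, main _ (Nat.find_spec h).1 (Nat.find_spec h).2
      (fun l hl hxl => Nat.find_min' h ⟨hl, hxl⟩)⟩
  · refine ⟨1, N.one_mem, fun y hy => ?_⟩
    obtain ⟨z, hz, n, hn⟩ := key y hy
    have hxn : x ^ n ∈ N := hn ▸ N.mul_mem (N.mul_mem hz hy) (N.inv_mem hz)
    have hn0 : n = 0 := by
      by_contra h0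
      refine h ⟨n.natAbs, Int.natAbs_pos.2 h0, ?_⟩
      rcases Int.natAbs_eq n with e | e
      · rw [e, zpow_natCast] at hxn
        exact hxn
      · rw [e, zpow_neg, zpow_natCast] at hxn
        exact N.inv_mem_iff.1 hxn
    exact ⟨z, hz, 0, by rw [hn, hn0, zpow_zero, zpow_zero]⟩
end

section
/- Let G be almost cyclic with conjugate generator x, and let N be a nontrivial normal subgroup of G such that the quotient G/N is cyclic. Then G/N is finite (hence finite cyclic). -/
/-- If `G` is almost cyclic with conjugate generator `x` and `N` is a
nontrivial normal subgroup with `G/N` cyclic, then `G/N` is finite. -/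
theorem quotient_finite_of_cyclic_quotient {G : Type*} [Group G] (x : G)
    (hx : ∀ y : G, ∃ a : G, ∃ n : ℤ, a * y * a⁻¹ = x ^ n)
    (N : Subgroup G) [N.Normal] (hN : N ≠ ⊥) (hcyc : IsCyclic (G ⧸ N)) :
    Finite (G ⧸ N) := by
  obtain ⟨⟨y, hyN⟩, hy⟩ := Subgroup.ne_bot_iff_exists_ne_one.1 hN
  have hy1 : y ≠ 1 := fun h => hy (Subtype.ext h)
  obtain ⟨a, n, h⟩ := hx y
  have hxn : x ^ n ∈ N := h ▸ Subgroup.Normal.conj_mem ‹N.Normal› y hyN a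
  have hn : n ≠ 0 := by
    rintro rfl
    rw [zpow_zero, conj_eq_one_iff] at h
    exact hy1 h
  have hfin : IsOfFinOrder (x : G ⧸ N) := by
    rw [isOfFinOrder_iff_zpow_eq_one]
    refine ⟨n, hn, ?_⟩
    rw [← QuotientGroup.mk_zpow]
    exact (QuotientGroup.eq_one_iff _).2 hxn
  have hcomm : ∀ u v : G ⧸ N, u * v = v * u := by
    obtain ⟨g, hg⟩ := hcyc.exists_generator
    intro u v
    obtain ⟨i, rfl⟩ := hg u
    obtain ⟨j, rfl⟩ := hg v
    exact zpow_mul_comm g i j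
  have hset : ((Subgroup.zpowers (x : G ⧸ N) : Subgroup (G ⧸ N)) : Set (G ⧸ N)) = Set.univ := by
    refine Set.eq_univ_of_forall fun z => ?_
    induction z using QuotientGroup.induction_on with
    | H z =>
      obtain ⟨b, m, hb⟩ := hx z
      refine ⟨m, ?_⟩
      have h2 := congrArg (QuotientGroup.mk (s := N)) hb
      rw [QuotientGroup.mk_mul, QuotientGroup.mk_mul, QuotientGroup.mk_inv,
        hcomm (b : G ⧸ N), mul_inv_cancel_right, QuotientGroup.mk_zpow] at h2
      exact h2.symm
  have hf := finite_zpowers.2 hfin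
  rw [hset] at hf
  exact Set.finite_univ_iff.1 hf
end

section
/- Let X be a type and r an element of the free group on X. If the one-relator group G = ⟨X | r⟩ is almost cyclic, then X has at most two elements (in particular X is finite with cardinality ≤ 2). -/
/-- If a one-relator group `⟨X | r⟩` is almost cyclic, then `X` has at
most two elements. -/
theorem one_relator_almost_cyclic_card_le_two {X : Type*} (r : FreeGroup X)
    (hG : ∃ x : PresentedGroup ({r} : Set (FreeGroup X)),
      ∀ y : PresentedGroup ({r} : Set (FreeGroup X)),
        ∃ a : PresentedGroup ({r} : Set (FreeGroup X)), ∃ n : ℤ,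
          a * y * a⁻¹ = x ^ n) :
    Finite X ∧ Nat.card X ≤ 2 := by
  classical
  obtain ⟨x, hx⟩ := hG
  obtain ⟨x, rfl⟩ := PresentedGroup.mk_surjective _ x
  let φ : FreeGroup X →* Multiplicative (X →₀ ℚ) :=
    FreeGroup.lift (fun i => Multiplicative.ofAdd (Finsupp.single i 1))
  let s : Finset (X →₀ ℚ) := {(φ x).toAdd, (φ r).toAdd}
  have hxs : (φ x).toAdd ∈ Submodule.span ℚ (s : Set (X →₀ ℚ)) :=
    Submodule.subset_span (by simp [s])
  have hrs : (φ r).toAdd ∈ Submodule.span ℚ (s : Set (X →₀ ℚ)) :=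
    Submodule.subset_span (by simp [s])
  have hN : Subgroup.normalClosure {r} ≤
      (AddSubgroup.toSubgroup (Submodule.span ℚ (s : Set (X →₀ ℚ))).toAddSubgroup).comap φ := by
    apply Subgroup.normalClosure_le_normal
    rw [Set.singleton_subset_iff]
    exact hrs
  have key : ∀ i : X, Finsupp.single i (1 : ℚ) ∈ Submodule.span ℚ (s : Set (X →₀ ℚ)) := by
    intro i
    obtain ⟨a, n, h⟩ := hx (PresentedGroup.mk _ (FreeGroup.of i))
    obtain ⟨a, rfl⟩ := PresentedGroup.mk_surjective _ a
    have h1 : PresentedGroup.mk {r} (a * FreeGroup.of i * a⁻¹ * (x ^ n)⁻¹) = 1 := by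
      rw [map_mul, map_mul, map_mul, map_inv, map_inv, h, map_zpow, mul_inv_cancel]
    have h2 := hN (PresentedGroup.mk_eq_one_iff.1 h1)
    have h3 : (φ (a * FreeGroup.of i * a⁻¹ * (x ^ n)⁻¹)).toAdd ∈
      Submodule.span ℚ (s : Set (X →₀ ℚ)) := h2
    have h4 : (φ (a * FreeGroup.of i * a⁻¹ * (x ^ n)⁻¹)).toAdd =
        Finsupp.single i (1 : ℚ) - n • (φ x).toAdd := by
      have : (φ (FreeGroup.of i)).toAdd = Finsupp.single i (1 : ℚ) := by simp [φ]
      rw [← this]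
      simp only [map_mul, map_inv, map_zpow, toAdd_mul, toAdd_inv, toAdd_zpow]
      abel
    rw [h4] at h3
    have h5 := Submodule.add_mem _ h3 (zsmul_mem hxs n)
    simpa using h5
  have htop : Submodule.span ℚ (s : Set (X →₀ ℚ)) = ⊤ := by
    rw [eq_top_iff, ← (Finsupp.basisSingleOne (R := ℚ) (ι := X)).span_eq, Submodule.span_le]
    rintro _ ⟨i, rfl⟩
    simpa using key i
  have hrank := rank_span_finset_le (R := ℚ) s
  rw [htop, rank_top, rank_finsupp_self] at hrank
  have hs : s.card ≤ 2 := Finset.card_le_two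
  have h2 : Cardinal.mk X ≤ (2 : ℕ) := by
    have := hrank.trans (Nat.cast_le.2 hs)
    simpa using this
  have hfin : Finite X := Cardinal.lt_aleph0_iff_finite.1 (h2.trans_lt Cardinal.natCast_lt_aleph0)
  refine ⟨hfin, ?_⟩
  have := Cardinal.toNat_le_toNat h2 Cardinal.natCast_lt_aleph0
  simpa [Nat.card] using this
end

section
/- Let G be a free group on a set X. If G is almost cyclic, then G is cyclic; equivalently, X has at most one element, so G is trivial or infinite cyclic. -/
/-- An almost cyclic free group is cyclic; equivalently the generating
set has at most one element. -/
theorem free_group_almost_cyclic_isCyclic {X : Type*}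
    (hG : ∃ x : FreeGroup X, ∀ y : FreeGroup X,
      ∃ a : FreeGroup X, ∃ n : ℤ, a * y * a⁻¹ = x ^ n) :
    IsCyclic (FreeGroup X) ∧ Subsingleton X := by
  classical
  obtain ⟨x, hx⟩ := hG
  have key : ∀ (f : FreeGroup X →* Multiplicative ℤ) (y a : FreeGroup X) (n : ℤ),
      a * y * a⁻¹ = x ^ n → (f y).toAdd = n * (f x).toAdd := by
    intro f y a n h
    have h2 := congrArg (fun z => (f z).toAdd) h
    simpa using h2
  have hs : Subsingleton X := by
    refine ⟨fun p q => ?_⟩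
    by_contra hpq
    let c : X → FreeGroup X →* Multiplicative ℤ := fun s =>
      FreeGroup.lift (fun t => Multiplicative.ofAdd (if t = s then (1 : ℤ) else 0))
    obtain ⟨a, n, h⟩ := hx (FreeGroup.of p)
    obtain ⟨b, m, k⟩ := hx (FreeGroup.of q)
    have h1 := key (c p) _ _ _ h
    have h2 := key (c q) _ _ _ h
    have h3 := key (c q) _ _ _ k
    have e1 : ((c p) (FreeGroup.of p)).toAdd = 1 := by simp [c]
    have e2 : ((c q) (FreeGroup.of p)).toAdd = 0 := by simp [c, hpq]
    have e3 : ((c q) (FreeGroup.of q)).toAdd = 1 := by simp [c]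
    rw [e1] at h1
    rw [e2] at h2
    rw [e3] at h3
    rcases mul_eq_zero.mp h2.symm with h0 | h0
    · rw [h0] at h1
      simp at h1
    · rw [h0] at h3
      simp at h3
  refine ⟨?_, hs⟩
  rcases isEmpty_or_nonempty X with he | ⟨⟨p⟩⟩
  · infer_instance
  · refine ⟨FreeGroup.of p, fun y => ?_⟩
    change y ∈ Subgroup.zpowers (FreeGroup.of p)
    induction y using FreeGroup.induction_on with
    | C1 => exact one_mem _
    | of q => rw [Subsingleton.elim q p]; exact Subgroup.mem_zpowers _
    | inv_of q h => exact inv_mem h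
    | mul u v hu hv => exact mul_mem hu hv
end
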